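/- Let F : ℝ^d → ℝ be twice continuously differentiable, let (Z, P_z) be a probability space, and let ĝ : ℝ^d × Z → ℝ^d and Ĥ : ℝ^d × Z → ℝ^{d×d} be such that for every z, the map x ↦ ĝ(x, z) is differentiable with Jacobian Ĥ(x, z), and E_{z∼P_z}‖Ĥ(x, z) − ∇²F(x)‖_op² ≤ σ₂² for all x ∈ ℝ^d (assume the needed integrability to interchange integrals). Then ĝ has the mean-squared smoothness property with parameter σ₂: for all x, y ∈ ℝ^d, E_{z∼P_z}‖ĝ(x, z) − ĝ(y, z) − (∇F(x) − ∇F(y))‖² ≤ σ₂²·‖x − y‖². -/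

import Mathlib

open MeasureTheory
open scoped RealInnerProductSpace

open Filter Function Topology
open scoped ENNReal NNReal

/-!
Let `G = g - ∇F` and let `D` be its Jacobian. Along a segment, the fundamental theorem of calculus
and Jensen's inequality bound `E‖G (x + v) - G x‖ ^ p` by the average of `E‖D (x + t v) v‖ ^ p`.
The bound on `E‖D x‖ ^ p` is a Bochner integral, which is `0` when the integrand is not integrable,
so it says nothing at points where `‖D x‖ ^ p` has infinite mean, and these may fill a whole
segment. Integrability along all segments implies, by Fubini in each basis direction, that such
points are Lebesgue-null; hence almost every parallel translate of a segment avoids them up to a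
null set of times. This gives the bound for almost every base point, and Fatou's lemma extends it
to all of them.
-/

section JointMeasurability

variable {X Y Z β : Type*} [MeasurableSpace X] [MeasurableSpace Y] [MeasurableSpace Z]
  [MeasurableSpace β] {P : Measure Z} {f : X → Z → β}

/-- A process `f : X → Z → β` is almost everywhere jointly measurable if it is indistinguishable
from a jointly measurable process. The exceptional null set of `z` does not depend on `x`, which
makes integrals over `z` exactly, and not only almost everywhere, measurable in `x`. -/
def AEJointlyMeasurable (f : X → Z → β) (P : Measure Z) : Prop :=
  ∃ g : X → Z → β, Measurable (uncurry g) ∧ ∀ᵐ z ∂P, ∀ x, f x z = g x z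

theorem aeJointlyMeasurable_of_continuous [TopologicalSpace X] [TopologicalSpace.MetrizableSpace X]
    [SecondCountableTopology X] [OpensMeasurableSpace X] [TopologicalSpace β]
    [TopologicalSpace.PseudoMetrizableSpace β] [BorelSpace β] [Nonempty β]
    (hcont : ∀ z, Continuous fun x => f x z) (hmeas : ∀ x, AEMeasurable (f x) P) :
    AEJointlyMeasurable f P := by
  classical
  obtain ⟨s, hs_countable, hs_dense⟩ := TopologicalSpace.exists_countable_dense X
  obtain ⟨T, hT_ae, hT_meas, hT⟩ := ((ae_ball_iff hs_countable).mpr fun x _ =>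
    (hmeas x).ae_eq_mk).exists_measurable_mem
  let g : X → Z → β := fun x => T.piecewise (f x) fun _ => Classical.arbitrary β
  have hg_cont : ∀ z, Continuous fun x => g x z := fun z => by
    by_cases hz : z ∈ T
    · simpa only [g, Set.piecewise_eq_of_mem _ _ _ hz] using hcont z
    · simpa only [g, Set.piecewise_eq_of_notMem _ _ _ hz] using continuous_const
  have hg_meas_dense : ∀ x ∈ s, Measurable (g x) := fun x hx => by
    have hg_mk : g x = T.piecewise ((hmeas x).mk (f x)) fun _ => Classical.arbitrary β :=
      funext fun z => if_ctx_congr Iff.rfl (fun hz => hT z hz x hx) fun _ => rfl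
    exact hg_mk ▸ (hmeas x).measurable_mk.piecewise hT_meas measurable_const
  have hg_meas : ∀ x, Measurable (g x) := fun x => by
    obtain ⟨u, hu_mem, hu⟩ := mem_closure_iff_seq_limit.mp (hs_dense x)
    exact measurable_of_tendsto_metrizable (fun n => hg_meas_dense (u n) (hu_mem n))
      (tendsto_pi_nhds.mpr fun z => ((hg_cont z).tendsto x).comp hu)
  refine ⟨g, measurable_uncurry_of_continuous_of_measurable hg_cont hg_meas, ?_⟩
  filter_upwards [hT_ae] with z hz x
  exact (Set.piecewise_eq_of_mem _ _ _ hz).symm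

theorem aeJointlyMeasurable_of_tendsto [ConditionallyCompleteLinearOrder β] [TopologicalSpace β]
    [OrderTopology β] [SecondCountableTopology β] [BorelSpace β] {u : ℕ → X → Z → β}
    (hu : ∀ n, AEJointlyMeasurable (u n) P)
    (hlim : ∀ x z, Tendsto (fun n => u n x z) atTop (𝓝 (f x z))) : AEJointlyMeasurable f P := by
  choose g hg_meas hg_eq using hu
  refine ⟨fun x z => limsup (fun n => g n x z) atTop, .limsup hg_meas, ?_⟩
  filter_upwards [ae_all_iff.mpr hg_eq] with z hz x
  simpa only [hz] using (hlim x z).limsup_eq.symm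

namespace AEJointlyMeasurable

theorem aemeasurable (hf : AEJointlyMeasurable f P) (x : X) : AEMeasurable (f x) P :=
  let ⟨g, hg_meas, hg_eq⟩ := hf
  ⟨g x, hg_meas.of_uncurry_left, hg_eq.mono fun _ hz => hz x⟩

theorem comp_measurable (hf : AEJointlyMeasurable f P) {φ : Y → X} (hφ : Measurable φ) :
    AEJointlyMeasurable (fun y => f (φ y)) P :=
  let ⟨g, hg_meas, hg_eq⟩ := hf
  ⟨fun y => g (φ y), hg_meas.comp (hφ.prodMap measurable_id), hg_eq.mono fun _ hz y => hz (φ y)⟩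

theorem measurable_comp {γ : Type*} [MeasurableSpace γ] {φ : β → γ} (hφ : Measurable φ)
    (hf : AEJointlyMeasurable f P) : AEJointlyMeasurable (fun x z => φ (f x z)) P :=
  let ⟨g, hg_meas, hg_eq⟩ := hf
  ⟨fun x z => φ (g x z), hφ.comp hg_meas, hg_eq.mono fun _ hz x => congrArg φ (hz x)⟩

theorem measurable_lintegral [SFinite P] {f : X → Z → ℝ≥0∞} (hf : AEJointlyMeasurable f P) :
    Measurable fun x => ∫⁻ z, f x z ∂P := by
  obtain ⟨g, hg_meas, hg_eq⟩ := hf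
  have hfg : ∀ x, ∫⁻ z, f x z ∂P = ∫⁻ z, g x z ∂P := fun x =>
    lintegral_congr_ae (hg_eq.mono fun _ hz => hz x)
  simpa only [hfg] using hg_meas.lintegral_prod_right

theorem lintegral_lintegral_swap [SFinite P] {μ : Measure X} [SFinite μ] {f : X → Z → ℝ≥0∞}
    (hf : AEJointlyMeasurable f P) :
    ∫⁻ z, ∫⁻ x, f x z ∂μ ∂P = ∫⁻ x, ∫⁻ z, f x z ∂P ∂μ := by
  obtain ⟨g, hg_meas, hg_eq⟩ := hf
  refine (MeasureTheory.lintegral_lintegral_swap ⟨uncurry g, hg_meas, ?_⟩).symm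
  filter_upwards [Measure.quasiMeasurePreserving_snd.ae hg_eq] with q hq using hq q.1

end AEJointlyMeasurable

end JointMeasurability

section Integration

variable {X Z F : Type*} [MeasurableSpace Z] [NormedAddCommGroup F] {P : Measure Z}

theorem rpow_lintegral_le_lintegral_rpow [IsProbabilityMeasure P] {p : ℝ} (hp : 1 ≤ p)
    (f : Z → ℝ≥0∞) : (∫⁻ z, f z ∂P) ^ p ≤ ∫⁻ z, f z ^ p ∂P := by
  obtain ⟨g, hg_meas, hgf, hg_eq⟩ := exists_measurable_le_lintegral_eq P f
  have hp_pos : 0 < p := one_pos.trans_le hp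
  have hLp : ∫⁻ z, g z ∂P ≤ (∫⁻ z, g z ^ p ∂P) ^ (1 / p) := by
    simpa only [eLpNorm', enorm_eq_self, ENNReal.rpow_one, div_one] using
      eLpNorm'_le_eLpNorm'_of_exponent_le one_pos hp P hg_meas.aestronglyMeasurable
  calc (∫⁻ z, f z ∂P) ^ p = (∫⁻ z, g z ∂P) ^ p := by rw [hg_eq]
    _ ≤ ∫⁻ z, g z ^ p ∂P := by
      rwa [one_div, ENNReal.le_rpow_inv_iff hp_pos] at hLp
    _ ≤ ∫⁻ z, f z ^ p ∂P := lintegral_mono fun z => ENNReal.rpow_le_rpow (hgf z) hp_pos.le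

theorem lowerSemicontinuous_lintegral [TopologicalSpace X] [FirstCountableTopology X]
    {f : X → Z → ℝ≥0∞} (hf : ∀ z, LowerSemicontinuous fun x => f x z)
    (hmeas : ∀ x, AEMeasurable (f x) P) : LowerSemicontinuous fun x => ∫⁻ z, f x z ∂P := by
  refine lowerSemicontinuous_iff_le_liminf.mpr fun x => ?_
  calc ∫⁻ z, f x z ∂P ≤ ∫⁻ z, liminf (fun y => f y z) (𝓝 x) ∂P :=
        lintegral_mono fun z => lowerSemicontinuousAt_iff_le_liminf.mp (hf z x)
    _ ≤ liminf (fun y => ∫⁻ z, f y z ∂P) (𝓝 x) := lintegral_liminf_le' hmeas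

theorem lintegral_enorm_rpow_eq_ofReal_integral {f : Z → F} {p : ℝ} (hp : 0 ≤ p)
    (hf : Integrable (fun z => ‖f z‖ ^ p) P) :
    ∫⁻ z, ‖f z‖ₑ ^ p ∂P = ENNReal.ofReal (∫ z, ‖f z‖ ^ p ∂P) := by
  rw [ofReal_integral_eq_lintegral_ofReal hf (.of_forall fun z => by positivity)]
  simp only [← ENNReal.ofReal_rpow_of_nonneg (norm_nonneg _) hp, ofReal_norm]

theorem integrable_norm_rpow_of_lintegral_enorm_rpow_lt_top {f : Z → F} {p : ℝ}
    (hmeas : AEMeasurable (fun z => ‖f z‖ₑ) P) (hfin : ∫⁻ z, ‖f z‖ₑ ^ p ∂P < ∞) :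
    Integrable (fun z => ‖f z‖ ^ p) P := by
  simpa only [← ENNReal.toReal_rpow, toReal_enorm] using
    integrable_toReal_of_lintegral_ne_top (hmeas.pow_const p) hfin.ne

end Integration

section Line

variable {E F : Type*} [NormedAddCommGroup E] [NormedSpace ℝ E] [NormedAddCommGroup F]
  [NormedSpace ℝ F]

theorem enorm_sub_le_lintegral_enorm_deriv_of_completeSpace [CompleteSpace F] {f f' : ℝ → F}
    {a b : ℝ} (hab : a ≤ b) (hf : ∀ t ∈ Set.Icc a b, HasDerivAt f (f' t) t) :
    ‖f b - f a‖ₑ ≤ ∫⁻ t in Set.Icc a b, ‖f' t‖ₑ := by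
  by_cases hfin : ∫⁻ t in Set.Icc a b, ‖f' t‖ₑ = ∞
  · exact hfin ▸ le_top
  have hf'_meas : AEStronglyMeasurable f' (volume.restrict (Set.Icc a b)) :=
    (stronglyMeasurable_deriv f).aestronglyMeasurable.congr <|
      (ae_restrict_mem measurableSet_Icc).mono fun t ht => (hf t ht).deriv
  have hf'_int : IntervalIntegrable f' volume a b :=
    (intervalIntegrable_iff_integrableOn_Icc_of_le hab).mpr
      ⟨hf'_meas, lt_top_iff_ne_top.mpr hfin⟩
  rw [← intervalIntegral.integral_eq_sub_of_hasDerivAt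
      (fun t ht => hf t (Set.uIcc_of_le hab ▸ ht)) hf'_int,
    intervalIntegral.integral_of_le hab, ← integral_Icc_eq_integral_Ioc]
  exact enorm_integral_le_lintegral_enorm _

theorem enorm_sub_le_lintegral_enorm_deriv {f f' : ℝ → F} {a b : ℝ} (hab : a ≤ b)
    (hf : ∀ t ∈ Set.Icc a b, HasDerivAt f (f' t) t) :
    ‖f b - f a‖ₑ ≤ ∫⁻ t in Set.Icc a b, ‖f' t‖ₑ := by
  let ι := UniformSpace.Completion.toComplₗᵢ (𝕜 := ℝ) (E := F)
  simpa only [comp_apply, ← map_sub, LinearIsometry.coe_toContinuousLinearMap,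
    LinearIsometry.enorm_map] using
    enorm_sub_le_lintegral_enorm_deriv_of_completeSpace hab fun t ht =>
      ι.toContinuousLinearMap.hasFDerivAt.comp_hasDerivAt t (hf t ht)

theorem hasDerivAt_line_of_hasLineDerivAt {f : E → F} {f' : F} {x v : E} {t : ℝ}
    (h : HasLineDerivAt ℝ f f' (x + t • v) v) : HasDerivAt (fun s => f (x + s • v)) f' t := by
  have h' : HasDerivAt (fun s : ℝ => f (x + t • v + s • v)) f' (t - t) := by rwa [sub_self]
  simpa only [add_assoc, ← add_smul, add_sub_cancel] using h'.comp_sub_const t t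

theorem ae_of_forall_ae_mem_segment [FiniteDimensional ℝ E] [MeasurableSpace E] [BorelSpace E]
    (μ : Measure E) [μ.IsAddHaarMeasure] {s : Set E} (hs : MeasurableSet s) (v : E)
    (h : ∀ x, ∀ᵐ t ∂(volume : Measure ℝ).restrict (Set.Icc 0 1), x + t • v ∈ s) :
    ∀ᵐ x ∂μ, x ∈ s := by
  refine ae_mem_of_ae_add_linearMap_mem (LinearMap.toSpanSingleton ℝ E v) volume μ hs fun x => ?_
  simp only [LinearMap.toSpanSingleton_apply]
  rw [← Measure.restrict_univ (μ := volume), ← iUnion_Icc_intCast ℝ, ae_restrict_iUnion_iff]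
  intro n
  have h_shift := ((measurePreserving_sub_right volume (n : ℝ)).restrict_preimage
    (measurableSet_Icc (a := (0 : ℝ)) (b := 1))).quasiMeasurePreserving.ae (h (x + (n : ℝ) • v))
  rw [Set.preimage_sub_const_Icc, zero_add, add_comm 1] at h_shift
  simpa only [add_assoc, ← add_smul, add_sub_cancel] using h_shift

end Line

section OperatorNorm

variable {E F Z : Type*} [NormedAddCommGroup E] [NormedSpace ℝ E] [NormedAddCommGroup F]
  [NormedSpace ℝ F] [MeasurableSpace Z] {P : Measure Z}

theorem enorm_eq_iSup_enorm_apply_div_of_denseRange {ι : Type*} {e : ι → E} (he : DenseRange e)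
    (A : E →L[ℝ] F) : ‖A‖ₑ = ⨆ i, ‖A (e i)‖ₑ / ‖e i‖ₑ := by
  refine le_antisymm (A.opENorm_le_bound fun v => ?_)
    (iSup_le fun i => ENNReal.div_le_of_le_mul (A.le_opENorm _))
  set M := ⨆ i, ‖A (e i)‖ₑ / ‖e i‖ₑ
  have h_range : ∀ i, ‖A (e i)‖ₑ ≤ M * ‖e i‖ₑ := fun i => by
    rcases eq_or_ne (e i) 0 with h_zero | h_ne
    · simp [h_zero]
    · exact (ENNReal.div_le_iff (enorm_ne_zero.mpr h_ne) enorm_ne_top).mp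
        (le_iSup (fun i => ‖A (e i)‖ₑ / ‖e i‖ₑ) i)
  rcases eq_or_ne M ∞ with hM | hM
  · rcases eq_or_ne v 0 with rfl | hv
    · simp
    · simp [hM, ENNReal.top_mul (enorm_ne_zero.mpr hv)]
  · exact he.induction_on v (isClosed_le A.continuous.enorm
      ((ENNReal.continuous_const_mul hM).comp continuous_enorm)) h_range

theorem aemeasurable_enorm_of_forall_apply [TopologicalSpace.SeparableSpace E]
    {A : Z → E →L[ℝ] F} (hA : ∀ v, AEMeasurable (fun z => ‖A z v‖ₑ) P) :
    AEMeasurable (fun z => ‖A z‖ₑ) P := by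
  simp only [enorm_eq_iSup_enorm_apply_div_of_denseRange (TopologicalSpace.denseRange_denseSeq E)]
  exact .iSup fun n => (hA _).div_const _

theorem exists_enorm_rpow_le_sum_basis {ι : Type*} [Fintype ι] (b : Module.Basis ι ℝ E) {p : ℝ}
    (hp : 0 < p) :
    ∃ C : ℝ≥0, ∀ A : E →L[ℝ] F, ‖A‖ₑ ^ p ≤ C * ∑ i, ‖A (b i)‖ₑ ^ p := by
  obtain ⟨C, -, hC⟩ := b.exists_opNNNorm_le (F := F)
  refine ⟨C ^ p, fun A => ?_⟩
  let S : ℝ≥0 := ∑ i, ‖A (b i)‖₊ ^ p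
  have hAS : ‖A‖₊ ≤ C * S ^ p⁻¹ := hC _ fun i => (NNReal.le_rpow_inv_iff hp).mpr <|
    Finset.single_le_sum (f := fun i => ‖A (b i)‖₊ ^ p) (fun _ _ => zero_le) (Finset.mem_univ i)
  have hAS_pow : ‖A‖₊ ^ p ≤ C ^ p * S := by
    simpa only [NNReal.mul_rpow, NNReal.rpow_inv_rpow hp.ne'] using
      NNReal.rpow_le_rpow hAS hp.le
  simp only [enorm_eq_nnnorm, ← ENNReal.coe_rpow_of_nonneg _ hp.le]
  exact_mod_cast hAS_pow

end OperatorNorm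

section MeanSmoothness

variable {E F Z : Type*} [NormedAddCommGroup E] [NormedSpace ℝ E] [NormedAddCommGroup F]
  [NormedSpace ℝ F] [MeasurableSpace Z] {P : Measure Z} {G G' : E → Z → F} {v : E} {p : ℝ}

theorem aeJointlyMeasurable_enorm_lineDeriv [SecondCountableTopology E] [MeasurableSpace E]
    [OpensMeasurableSpace E] (hcont : ∀ z, Continuous fun x => G x z)
    (hG' : ∀ z x, HasLineDerivAt ℝ (fun w => G w z) (G' x z) x v)
    (hmeas : ∀ x y, AEMeasurable (fun z => ‖G x z - G y z‖ₑ) P) :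
    AEJointlyMeasurable (fun x z => ‖G' x z‖ₑ) P := by
  obtain ⟨u, -, hu_pos, hu⟩ := exists_seq_strictAnti_tendsto (0 : ℝ)
  have hu_ne : Tendsto u atTop (𝓝[≠] 0) :=
    tendsto_nhdsWithin_iff.mpr ⟨hu, .of_forall fun n => (hu_pos n).ne'⟩
  refine aeJointlyMeasurable_of_tendsto
    (u := fun n x z => ‖(u n)⁻¹‖ₑ * ‖G (x + u n • v) z - G x z‖ₑ) (fun n => ?_) fun x z => ?_
  · refine .measurable_comp (measurable_const_mul _) <|
      aeJointlyMeasurable_of_continuous (fun z => ?_) fun x => hmeas _ _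
    have := hcont z
    fun_prop
  · simpa only [comp_def, enorm_smul] using
      ((hasLineDerivAt_iff_tendsto_slope_zero.mp (hG' z x)).comp hu_ne).enorm

theorem lintegral_enorm_add_sub_rpow_le_of_ae_segment [SFinite P] (hp : 1 ≤ p) {C : ℝ≥0∞} {x : E}
    (hG' : ∀ z y, HasLineDerivAt ℝ (fun w => G w z) (G' y z) y v)
    (hmeas : AEJointlyMeasurable (fun (t : ℝ) z => ‖G' (x + t • v) z‖ₑ ^ p) P)
    (hC : ∀ᵐ t ∂(volume : Measure ℝ).restrict (Set.Icc 0 1),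
      ∫⁻ z, ‖G' (x + t • v) z‖ₑ ^ p ∂P ≤ C) :
    ∫⁻ z, ‖G (x + v) z - G x z‖ₑ ^ p ∂P ≤ C := by
  have : IsProbabilityMeasure ((volume : Measure ℝ).restrict (Set.Icc 0 1)) := ⟨by simp⟩
  have h_ftc : ∀ z, ‖G (x + v) z - G x z‖ₑ ≤ ∫⁻ t in Set.Icc (0 : ℝ) 1, ‖G' (x + t • v) z‖ₑ :=
    fun z => by
      simpa only [one_smul, zero_smul, add_zero] using
        enorm_sub_le_lintegral_enorm_deriv zero_le_one fun t _ =>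
          hasDerivAt_line_of_hasLineDerivAt (hG' z (x + t • v))
  calc ∫⁻ z, ‖G (x + v) z - G x z‖ₑ ^ p ∂P
      ≤ ∫⁻ z, (∫⁻ t in Set.Icc (0 : ℝ) 1, ‖G' (x + t • v) z‖ₑ) ^ p ∂P :=
        lintegral_mono fun z => ENNReal.rpow_le_rpow (h_ftc z) (zero_le_one.trans hp)
    _ ≤ ∫⁻ z, (∫⁻ t in Set.Icc (0 : ℝ) 1, ‖G' (x + t • v) z‖ₑ ^ p) ∂P :=
        lintegral_mono fun z => rpow_lintegral_le_lintegral_rpow hp _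
    _ = ∫⁻ t in Set.Icc (0 : ℝ) 1, ∫⁻ z, ‖G' (x + t • v) z‖ₑ ^ p ∂P :=
        hmeas.lintegral_lintegral_swap
    _ ≤ ∫⁻ _ in Set.Icc (0 : ℝ) 1, C := lintegral_mono_ae hC
    _ = C := by simp

variable [FiniteDimensional ℝ E] [MeasurableSpace E] [BorelSpace E] [SFinite P]

theorem lintegral_enorm_add_sub_rpow_le_of_ae {μ : Measure E} [μ.IsAddHaarMeasure] (hp : 1 ≤ p)
    {C : ℝ≥0∞} (hcont : ∀ z, Continuous fun x => G x z)
    (hG' : ∀ z x, HasLineDerivAt ℝ (fun w => G w z) (G' x z) x v)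
    (hmeas : ∀ x y, AEMeasurable (fun z => ‖G x z - G y z‖ₑ) P)
    (hC : ∀ᵐ x ∂μ, ∫⁻ z, ‖G' x z‖ₑ ^ p ∂P ≤ C) (x : E) :
    ∫⁻ z, ‖G (x + v) z - G x z‖ₑ ^ p ∂P ≤ C := by
  have hG'_meas : AEJointlyMeasurable (fun x z => ‖G' x z‖ₑ ^ p) P :=
    (aeJointlyMeasurable_enorm_lineDeriv hcont hG' hmeas).measurable_comp
      (measurable_id.pow_const p)
  have h_ae_line : ∀ᵐ y ∂μ, ∀ᵐ t : ℝ, ∫⁻ z, ‖G' (y + t • v) z‖ₑ ^ p ∂P ≤ C :=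
    (ae_ae_add_linearMap_mem_iff (LinearMap.toSpanSingleton ℝ E v) volume μ
      (measurableSet_le hG'_meas.measurable_lintegral measurable_const)).mpr hC
  have h_ae : ∀ᵐ y ∂μ, ∫⁻ z, ‖G (y + v) z - G y z‖ₑ ^ p ∂P ≤ C := by
    filter_upwards [h_ae_line] with y hy
    exact lintegral_enorm_add_sub_rpow_le_of_ae_segment hp hG'
      (hG'_meas.comp_measurable (by fun_prop)) (ae_restrict_of_ae hy)
  have h_lsc : LowerSemicontinuous fun y => ∫⁻ z, ‖G (y + v) z - G y z‖ₑ ^ p ∂P :=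
    lowerSemicontinuous_lintegral (fun z => by
      have := hcont z
      exact (ENNReal.continuous_rpow_const.comp (by fun_prop :
        Continuous fun y => ‖G (y + v) z - G y z‖ₑ)).lowerSemicontinuous)
      fun y => (hmeas _ _).pow_const p
  exact (h_lsc.isClosed_preimage C).closure_subset (Measure.dense_of_ae h_ae x)

theorem ae_lintegral_enorm_rpow_lt_top_of_segment (μ : Measure E) [μ.IsAddHaarMeasure] (hp : 0 < p)
    {D : E → Z → E →L[ℝ] F} (hmeas : ∀ v, AEJointlyMeasurable (fun x z => ‖D x z v‖ₑ) P)
    (hfin : ∀ x v, ∀ᵐ t ∂(volume : Measure ℝ).restrict (Set.Icc 0 1),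
      ∫⁻ z, ‖D (x + t • v) z v‖ₑ ^ p ∂P < ∞) :
    ∀ᵐ x ∂μ, ∫⁻ z, ‖D x z‖ₑ ^ p ∂P < ∞ := by
  let b := Module.finBasis ℝ E
  obtain ⟨C, hC⟩ := exists_enorm_rpow_le_sum_basis (F := F) b hp
  have h_pow_meas : ∀ v, AEJointlyMeasurable (fun x z => ‖D x z v‖ₑ ^ p) P := fun v =>
    (hmeas v).measurable_comp (measurable_id.pow_const p)
  have h_basis : ∀ᵐ x ∂μ, ∀ i, ∫⁻ z, ‖D x z (b i)‖ₑ ^ p ∂P < ∞ := ae_all_iff.mpr fun i =>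
    ae_of_forall_ae_mem_segment μ
      (measurableSet_lt (h_pow_meas (b i)).measurable_lintegral measurable_const) (b i)
      fun x => hfin x (b i)
  filter_upwards [h_basis] with x hx
  calc ∫⁻ z, ‖D x z‖ₑ ^ p ∂P ≤ ∫⁻ z, C * ∑ i, ‖D x z (b i)‖ₑ ^ p ∂P :=
        lintegral_mono fun z => hC (D x z)
    _ = C * ∑ i, ∫⁻ z, ‖D x z (b i)‖ₑ ^ p ∂P := by
        rw [lintegral_const_mul' _ _ ENNReal.coe_ne_top,
          lintegral_finsetSum' _ fun i _ => (h_pow_meas (b i)).aemeasurable x]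
    _ < ∞ := ENNReal.mul_lt_top ENNReal.coe_lt_top (ENNReal.sum_lt_top.mpr fun i _ => hx i)

theorem ae_lintegral_enorm_rpow_le_ofReal_of_segment (μ : Measure E) [μ.IsAddHaarMeasure]
    (hp : 0 < p) {C : ℝ} {D : E → Z → E →L[ℝ] F}
    (hmeas : ∀ v, AEJointlyMeasurable (fun x z => ‖D x z v‖ₑ) P)
    (hint : ∀ x v, ∀ᵐ t ∂(volume : Measure ℝ).restrict (Set.Icc 0 1),
      Integrable (fun z => ‖D (x + t • v) z v‖ ^ p) P)
    (hC : ∀ x, ∫ z, ‖D x z‖ ^ p ∂P ≤ C) :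
    ∀ᵐ x ∂μ, ∫⁻ z, ‖D x z‖ₑ ^ p ∂P ≤ ENNReal.ofReal C := by
  have h_ae_fin : ∀ᵐ x ∂μ, ∫⁻ z, ‖D x z‖ₑ ^ p ∂P < ∞ :=
    ae_lintegral_enorm_rpow_lt_top_of_segment μ hp hmeas fun x v => (hint x v).mono fun t ht =>
      lintegral_enorm_rpow_eq_ofReal_integral hp.le ht ▸ ENNReal.ofReal_lt_top
  filter_upwards [h_ae_fin] with x hx
  have h_int : Integrable (fun z => ‖D x z‖ ^ p) P :=
    integrable_norm_rpow_of_lintegral_enorm_rpow_lt_top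
      (aemeasurable_enorm_of_forall_apply fun v => (hmeas v).aemeasurable x) hx
  rw [lintegral_enorm_rpow_eq_ofReal_integral hp.le h_int]
  exact ENNReal.ofReal_le_ofReal (hC x)

theorem lintegral_enorm_sub_rpow_le_of_ae_enorm_fderiv {μ : Measure E} [μ.IsAddHaarMeasure]
    (hp : 1 ≤ p) {C : ℝ≥0∞} {D : E → Z → E →L[ℝ] F}
    (hD : ∀ z x, HasFDerivAt (fun w => G w z) (D x z) x)
    (hmeas : ∀ x y, AEMeasurable (fun z => ‖G x z - G y z‖ₑ) P)
    (hC : ∀ᵐ x ∂μ, ∫⁻ z, ‖D x z‖ₑ ^ p ∂P ≤ C) (x y : E) :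
    ∫⁻ z, ‖G x z - G y z‖ₑ ^ p ∂P ≤ C * ‖x - y‖ₑ ^ p := by
  have hp_nonneg : 0 ≤ p := zero_le_one.trans hp
  have h_dir : ∀ᵐ w ∂μ, ∫⁻ z, ‖D w z (x - y)‖ₑ ^ p ∂P ≤ C * ‖x - y‖ₑ ^ p := by
    filter_upwards [hC] with w hw
    calc ∫⁻ z, ‖D w z (x - y)‖ₑ ^ p ∂P ≤ ∫⁻ z, ‖D w z‖ₑ ^ p * ‖x - y‖ₑ ^ p ∂P := by
          simp only [← ENNReal.mul_rpow_of_nonneg _ _ hp_nonneg]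
          gcongr
          exact (D w _).le_opENorm _
      _ = (∫⁻ z, ‖D w z‖ₑ ^ p ∂P) * ‖x - y‖ₑ ^ p := lintegral_mul_const' _ _ (by finiteness)
      _ ≤ C * ‖x - y‖ₑ ^ p := by gcongr
  simpa only [add_sub_cancel] using lintegral_enorm_add_sub_rpow_le_of_ae hp
    (fun z => continuous_iff_continuousAt.mpr fun w => (hD z w).continuousAt)
    (fun z w => (hD z w).hasLineDerivAt (x - y)) hmeas h_dir y

end MeanSmoothness

theorem stmt_7_general {E F Z : Type*} [NormedAddCommGroup E] [NormedSpace ℝ E]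
    [FiniteDimensional ℝ E] [NormedAddCommGroup F] [NormedSpace ℝ F] [MeasurableSpace Z]
    {P : Measure Z} [SFinite P] {p C : ℝ} (hp : 1 ≤ p) {G : E → Z → F} {D : E → Z → E →L[ℝ] F}
    (hD : ∀ z x, HasFDerivAt (fun w => G w z) (D x z) x)
    (hC : ∀ x, ∫ z, ‖D x z‖ ^ p ∂P ≤ C)
    (hmeas : ∀ x y, AEMeasurable (fun z => ‖G x z - G y z‖) P)
    (hint : ∀ x v, ∀ᵐ t ∂(volume : Measure ℝ).restrict (Set.Icc 0 1),
      Integrable (fun z => ‖D (x + t • v) z v‖ ^ p) P) (x y : E) :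
    Integrable (fun z => ‖G x z - G y z‖ ^ p) P ∧
      ∫ z, ‖G x z - G y z‖ ^ p ∂P ≤ C * ‖x - y‖ ^ p := by
  borelize E
  have hmeas' : ∀ x y, AEMeasurable (fun z => ‖G x z - G y z‖ₑ) P := fun x y => by
    simpa only [ofReal_norm] using (hmeas x y).ennreal_ofReal
  have hD_meas : ∀ v, AEJointlyMeasurable (fun x z => ‖D x z v‖ₑ) P := fun v =>
    aeJointlyMeasurable_enorm_lineDeriv
      (fun z => continuous_iff_continuousAt.mpr fun w => (hD z w).continuousAt)
      (fun z w => (hD z w).hasLineDerivAt v) hmeas'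
  have h_bound : ∫⁻ z, ‖G x z - G y z‖ₑ ^ p ∂P ≤ ENNReal.ofReal C * ‖x - y‖ₑ ^ p :=
    lintegral_enorm_sub_rpow_le_of_ae_enorm_fderiv (μ := .addHaar) hp hD hmeas'
      (ae_lintegral_enorm_rpow_le_ofReal_of_segment .addHaar (one_pos.trans_le hp) hD_meas hint hC)
      x y
  have hp_nonneg : 0 ≤ p := zero_le_one.trans hp
  have hC_nonneg : 0 ≤ C := le_trans (integral_nonneg fun z => by positivity) (hC x)
  have h_int : Integrable (fun z => ‖G x z - G y z‖ ^ p) P :=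
    integrable_norm_rpow_of_lintegral_enorm_rpow_lt_top (hmeas' x y)
      (h_bound.trans_lt (by finiteness))
  refine ⟨h_int, (ENNReal.ofReal_le_ofReal_iff (by positivity)).mp ?_⟩
  rwa [← lintegral_enorm_rpow_eq_ofReal_integral hp_nonneg h_int, ENNReal.ofReal_mul hC_nonneg,
    ← ENNReal.ofReal_rpow_of_nonneg (norm_nonneg _) hp_nonneg, ofReal_norm]

/-- If the stochastic Hessian estimator `HEst` is the Jacobian of the
stochastic gradient estimator `gEst`, and `HEst` has operator-norm variance at most `σ₂²`
around the true Hessian, then `gEst` is mean-squared smooth with parameter `σ₂`: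
`E_z‖gEst(x,z) - gEst(y,z) - (∇F(x) - ∇F(y))‖² ≤ σ₂²‖x - y‖²`. -/
theorem stmt_7 {d : ℕ} {Z : Type*} [MeasurableSpace Z]
    (P : Measure Z) [IsProbabilityMeasure P]
    (F : EuclideanSpace ℝ (Fin d) → ℝ)
    (gradF : EuclideanSpace ℝ (Fin d) → EuclideanSpace ℝ (Fin d))
    (hessF : EuclideanSpace ℝ (Fin d) →
      EuclideanSpace ℝ (Fin d) →L[ℝ] EuclideanSpace ℝ (Fin d))
    (σ₂ : ℝ)
    (hF : ContDiff ℝ 2 F)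
    (hgrad : ∀ z, HasGradientAt F (gradF z) z)
    (hhess : ∀ z, HasFDerivAt gradF (hessF z) z)
    (gEst : EuclideanSpace ℝ (Fin d) → Z → EuclideanSpace ℝ (Fin d))
    (HEst : EuclideanSpace ℝ (Fin d) → Z →
      EuclideanSpace ℝ (Fin d) →L[ℝ] EuclideanSpace ℝ (Fin d))
    (hjac : ∀ z x, HasFDerivAt (fun w => gEst w z) (HEst x z) x)
    (hvar : ∀ x, ∫ z, ‖HEst x z - hessF x‖ ^ 2 ∂P ≤ σ₂ ^ 2)
    -- integrability assumptions needed to interchange integrals: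
    (hmss_int : ∀ x y,
      Integrable (fun z => ‖gEst x z - gEst y z - (gradF x - gradF y)‖ ^ 2) P)
    (hFub : ∀ x y, Integrable
      (fun p : ℝ × Z =>
        ‖(HEst (y + p.1 • (x - y)) p.2 - hessF (y + p.1 • (x - y))) (x - y)‖ ^ 2)
      (((volume : Measure ℝ).restrict (Set.Icc 0 1)).prod P)) :
    ∀ x y, ∫ z, ‖gEst x z - gEst y z - (gradF x - gradF y)‖ ^ 2 ∂P
      ≤ σ₂ ^ 2 * ‖x - y‖ ^ 2 := by
  intro x y
  have hmain := stmt_7_general (P := P) one_le_two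
    (G := fun x z => gEst x z - gradF x) (D := fun x z => HEst x z - hessF x) (C := σ₂ ^ 2)
    (fun z x => (hjac z x).sub (hhess x))
  simp only [Real.rpow_two, sub_sub_sub_comm _ (gradF _)] at hmain
  exact (hmain hvar (fun x y => by simpa using (hmss_int x y).aemeasurable.sqrt)
    (fun x v => by simpa using (hFub (x + v) x).prod_right_ae) x y).2
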